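/- Let b ≥ 1/2, T̃ > 0, let y, h : [0,T̃] → (0,∞) be continuous with y(k) < h(k) for all k, and let Ψ, Φ : [0,T̃] → ℝ be continuous. With the Bessel heat kernel q_s(z,ζ,b) = (√(zζ)/s)·(ζ/z)^b·exp(−(z²+ζ²)/(2s))·I_{b−1/2}(zζ/s), fix τ ∈ (0,T̃] and z > 0 such that y(k) < z < h(k) for all k ∈ [0,τ]. Then the double-layer Bessel potential q(τ,z) := ∫_0^τ { Ψ(k)·[∂q_{τ−k}(z,ζ,b)/∂ζ]|_{ζ=y(k)} + Φ(k)·[∂q_{τ−k}(z,ζ,b)/∂ζ]|_{ζ=h(k)} } dk is well defined (both integrands extend continuously by 0 at k = τ), and on the open set of such points it is C¹ in τ and C² in z and satisfies ∂q/∂τ = (1/2)∂²q/∂z² + (b/z)∂q/∂z. -/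

import Mathlib

/-- Modified Bessel function of the first kind,
`I_ν(x) = Σ_{k=0}^∞ (x/2)^{2k+ν}/(k!·Γ(k+ν+1))`. -/
noncomputable def besselI (ν x : ℝ) : ℝ :=
  ∑' k : ℕ, (x / 2) ^ (2 * (k : ℝ) + ν) / ((Nat.factorial k : ℝ) * Real.Gamma ((k : ℝ) + ν + 1))

/-- Bessel heat kernel
`q_s(z,ζ,b) = (√(zζ)/s)·(ζ/z)^b·exp(−(z²+ζ²)/(2s))·I_{b−1/2}(zζ/s)`. -/
noncomputable def besselKernel (b s z ζ : ℝ) : ℝ :=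
  Real.sqrt (z * ζ) / s * (ζ / z) ^ b * Real.exp (-(z ^ 2 + ζ ^ 2) / (2 * s)) *
    besselI (b - 1 / 2) (z * ζ / s)

/-!
Off the diagonal `z = ζ` the Bessel heat kernel is flat at `s = 0`: the factor `I_{b-1/2}(zζ/s)`
grows at most like `exp (zζ/s)`, so the kernel and all its derivatives are dominated by a power of
`s` times `exp (-(z - ζ)²/(2s))`. Written with the entire Bessel–Clifford function `𝒞_ν`, the kernel
is a combination of heat blocks `s^{-m} exp (-(z² + ζ²)/(2s)) 𝒞_ν(z²ζ²/(4s²))`, whose derivatives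
are again combinations of heat blocks; the recurrence of `𝒞_ν` then gives the Bessel equation.
Hence the `ζ`-derivative of the kernel, extended by `0` to `s ≤ 0`, is a classical solution in
`(s, z)` across `s = 0`, and its potential along a curve avoiding `z` can be taken up to a fixed
time horizon and differentiated under the integral sign.
-/

open Set Filter Topology MeasureTheory Real

/-- The Taylor coefficients `1 / (k! Γ(k + ν + 1))` of the Bessel–Clifford function. Mathlib's
`Γ = 0` at the poles makes the coefficient `0` there, in agreement with the entire function `1/Γ`,
so that the recurrences below hold for every real `ν`. -/
noncomputable def cliffordCoeff (ν : ℝ) (k : ℕ) : ℝ :=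
  ((k.factorial : ℝ) * Gamma (k + ν + 1))⁻¹

/-- The Bessel–Clifford function `𝒞_ν`, the entire function with
`I_ν(x) = (x/2)^ν 𝒞_ν(x²/4)`. -/
noncomputable def besselClifford (ν w : ℝ) : ℝ :=
  ∑' k : ℕ, cliffordCoeff ν k * w ^ k

section Clifford

lemma inv_Gamma_eq_self_mul_inv_Gamma_add_one (x : ℝ) : (Gamma x)⁻¹ = x * (Gamma (x + 1))⁻¹ := by
  obtain rfl | hx := eq_or_ne x 0
  · simp [Real.Gamma_zero]
  · rw [Real.Gamma_add_one hx, mul_inv, mul_inv_cancel_left₀ hx]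

lemma cliffordCoeff_eq_mul (ν : ℝ) (k : ℕ) :
    cliffordCoeff ν k = (k + ν + 1) * cliffordCoeff (ν + 1) k := by
  simp only [cliffordCoeff, mul_inv]
  rw [inv_Gamma_eq_self_mul_inv_Gamma_add_one, ← add_assoc (k : ℝ) ν 1]
  ring

lemma succ_mul_cliffordCoeff_succ (ν : ℝ) (k : ℕ) :
    (k + 1) * cliffordCoeff ν (k + 1) = cliffordCoeff (ν + 1) k := by
  have hk : (k : ℝ) + 1 ≠ 0 := by positivity
  simp only [cliffordCoeff, Nat.factorial_succ, mul_inv, Nat.cast_mul, Nat.cast_succ]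
  rw [show (k : ℝ) + 1 + ν + 1 = k + (ν + 1) + 1 by ring]
  field_simp

lemma mul_cliffordCoeff_succ (ν : ℝ) (k : ℕ) :
    (k + 1) * (k + ν + 1) * cliffordCoeff ν (k + 1) = cliffordCoeff ν k := by
  rw [cliffordCoeff_eq_mul ν k, ← succ_mul_cliffordCoeff_succ]
  ring

lemma summable_norm_cliffordCoeff_mul_pow (ν w : ℝ) :
    Summable fun k : ℕ => ‖cliffordCoeff ν k * w ^ k‖ := by
  suffices hratio : ∀ᶠ k : ℕ in atTop, ‖cliffordCoeff ν (k + 1) * w ^ (k + 1)‖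
      ≤ 1 / 2 * ‖cliffordCoeff ν k * w ^ k‖ from
    (summable_of_ratio_norm_eventually_le (f := fun k => cliffordCoeff ν k * w ^ k)
      one_half_lt_one hratio).norm
  have hcast := tendsto_natCast_atTop_atTop (R := ℝ)
  filter_upwards [hcast.eventually_ge_atTop (2 * |w|), hcast.eventually_ge_atTop (-ν)] with k hw hν
  have hw' : |w| ≤ 1 / 2 * ((k + 1) * (k + ν + 1)) := by nlinarith [abs_nonneg w]
  have hpos : (0 : ℝ) ≤ (k + 1) * (k + ν + 1) := by nlinarith [k.cast_nonneg (α := ℝ)]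
  rw [← mul_cliffordCoeff_succ ν k]
  simp only [norm_mul, norm_pow, norm_eq_abs, pow_succ]
  calc |cliffordCoeff ν (k + 1)| * (|w| ^ k * |w|)
      = |w| * (|cliffordCoeff ν (k + 1)| * |w| ^ k) := by ring
    _ ≤ 1 / 2 * ((k + 1) * (k + ν + 1)) * (|cliffordCoeff ν (k + 1)| * |w| ^ k) := by gcongr
    _ = _ := by rw [← abs_mul _ (k + ν + 1), abs_of_nonneg hpos]; ring

lemma hasSum_besselClifford (ν w : ℝ) :
    HasSum (fun k : ℕ => cliffordCoeff ν k * w ^ k) (besselClifford ν w) :=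
  (summable_norm_cliffordCoeff_mul_pow ν w).of_norm.hasSum

lemma hasSum_natCast_mul_cliffordCoeff (ν w : ℝ) :
    HasSum (fun k : ℕ => k * cliffordCoeff ν k * w ^ (k - 1)) (besselClifford (ν + 1) w) := by
  rw [← hasSum_nat_add_iff' 1]
  simpa [succ_mul_cliffordCoeff_succ] using hasSum_besselClifford (ν + 1) w

lemma hasDerivAt_besselClifford (ν w : ℝ) :
    HasDerivAt (besselClifford ν) (besselClifford (ν + 1) w) w := by
  obtain ⟨R, hwR⟩ := exists_gt |w|
  have hw : w ∈ Metric.ball (0 : ℝ) R := mem_ball_zero_iff.2 hwR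
  have hbound : Summable fun k : ℕ => ‖(k : ℝ) * cliffordCoeff ν k * R ^ (k - 1)‖ := by
    rw [← summable_nat_add_iff 1]
    simpa [succ_mul_cliffordCoeff_succ] using summable_norm_cliffordCoeff_mul_pow (ν + 1) R
  rw [← (hasSum_natCast_mul_cliffordCoeff ν w).tsum_eq]
  refine hasDerivAt_tsum_of_isPreconnected
    (g := fun (k : ℕ) x => cliffordCoeff ν k * x ^ k)
    (g' := fun (k : ℕ) x => k * cliffordCoeff ν k * x ^ (k - 1))
    hbound Metric.isOpen_ball (convex_ball _ _).isPreconnected (fun k x _ => ?_) (fun k x hx => ?_)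
    hw (hasSum_besselClifford ν w).summable hw
  · convert! (hasDerivAt_pow k x).const_mul (cliffordCoeff ν k) using 1
    ring
  · have hxR : |x| ≤ |R| := (mem_ball_zero_iff.1 hx).le.trans (le_abs_self R)
    simp only [norm_mul, norm_pow, norm_eq_abs]
    gcongr

lemma continuous_besselClifford (ν : ℝ) : Continuous (besselClifford ν) :=
  continuous_iff_continuousAt.2 fun w => (hasDerivAt_besselClifford ν w).continuousAt

lemma besselClifford_eq (ν w : ℝ) :
    besselClifford ν w
      = (ν + 1) * besselClifford (ν + 1) w + w * besselClifford (ν + 1 + 1) w := by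
  refine (hasSum_besselClifford ν w).unique ?_
  refine (((hasSum_besselClifford (ν + 1) w).mul_left (ν + 1)).add
    ((hasSum_natCast_mul_cliffordCoeff (ν + 1) w).mul_left w)).congr_fun fun k => ?_
  rw [cliffordCoeff_eq_mul]
  rcases k with _ | k
  · simp
  · simp only [Nat.add_sub_cancel, pow_succ]
    push_cast
    ring

lemma cliffordCoeff_nonneg {ν : ℝ} (hν : 0 ≤ ν) (k : ℕ) : 0 ≤ cliffordCoeff ν k := by
  have := Gamma_pos_of_pos (show 0 < k + ν + 1 by positivity)
  unfold cliffordCoeff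
  positivity

lemma cliffordCoeff_le {ν : ℝ} (hν : 0 ≤ ν) (k : ℕ) :
    cliffordCoeff ν k ≤ (Gamma (ν + 1))⁻¹ * ((k.factorial : ℝ)⁻¹ * (k.factorial : ℝ)⁻¹) := by
  induction k with
  | zero => simp [cliffordCoeff]
  | succ k ih =>
    have hstep : (k + 1) * (k + 1) * cliffordCoeff ν (k + 1) ≤ cliffordCoeff ν k := by
      rw [← mul_cliffordCoeff_succ ν k]
      have := cliffordCoeff_nonneg hν (k + 1)
      gcongr
      linarith
    have hle := hstep.trans ih
    rw [mul_comm, ← le_div_iff₀ (by positivity)] at hle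
    refine hle.trans_eq ?_
    push_cast [Nat.factorial_succ]
    field_simp

lemma besselClifford_nonneg {ν w : ℝ} (hν : 0 ≤ ν) (hw : 0 ≤ w) : 0 ≤ besselClifford ν w :=
  tsum_nonneg fun k => mul_nonneg (cliffordCoeff_nonneg hν k) (pow_nonneg hw k)

lemma besselClifford_sq_div_four_le {ν x : ℝ} (hν : 0 ≤ ν) (hx : 0 ≤ x) :
    besselClifford ν (x ^ 2 / 4) ≤ (Gamma (ν + 1))⁻¹ * exp x := by
  have := Gamma_pos_of_pos (show 0 < ν + 1 by linarith)
  have hexp : HasSum (fun k : ℕ => (x / 2) ^ k / (k.factorial : ℝ)) (exp (x / 2)) := by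
    rw [Real.exp_eq_exp_ℝ]
    exact NormedSpace.expSeries_div_hasSum_exp (x / 2)
  have hmajorant := hexp.mul_left ((Gamma (ν + 1))⁻¹ * exp (x / 2))
  rw [mul_assoc, ← exp_add, add_halves] at hmajorant
  refine hasSum_le (fun k => ?_) (hasSum_besselClifford ν _) hmajorant
  calc cliffordCoeff ν k * (x ^ 2 / 4) ^ k
      ≤ (Gamma (ν + 1))⁻¹ * ((k.factorial : ℝ)⁻¹ * (k.factorial : ℝ)⁻¹) * (x ^ 2 / 4) ^ k := by
        gcongr
        exact cliffordCoeff_le hν k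
    _ = (Gamma (ν + 1))⁻¹ * ((x / 2) ^ k / k.factorial) * ((x / 2) ^ k / k.factorial) := by
        rw [show x ^ 2 / 4 = x / 2 * (x / 2) by ring, mul_pow]
        ring
    _ ≤ (Gamma (ν + 1))⁻¹ * exp (x / 2) * ((x / 2) ^ k / k.factorial) := by
        gcongr
        exact pow_div_factorial_le_exp (x / 2) (by positivity) k

lemma besselI_eq {x : ℝ} (ν : ℝ) (hx : 0 < x) :
    besselI ν x = (x / 2) ^ ν * besselClifford ν (x ^ 2 / 4) := by
  unfold besselI besselClifford
  rw [← tsum_mul_left]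
  refine tsum_congr fun k => ?_
  have hx2 : 0 < x / 2 := by positivity
  rw [rpow_add hx2, rpow_mul hx2.le, rpow_natCast, show (x / 2) ^ (2 : ℝ) = x ^ 2 / 4 by
    norm_cast; ring, cliffordCoeff]
  ring

end Clifford

/-- The elementary heat block `s^{-m} exp(-(z² + ζ²)/(2s)) 𝒞_ν(z²ζ²/(4s²))`, extended by `0` to
`s ≤ 0`. The Bessel heat kernel and all its derivatives are combinations of heat blocks with
polynomial coefficients. -/
noncomputable def heatBlock (s z ζ ν m : ℝ) : ℝ :=
  if 0 < s then
    s ^ (-m) * exp (-(z ^ 2 + ζ ^ 2) / (2 * s)) * besselClifford ν (z ^ 2 * ζ ^ 2 / (4 * s ^ 2))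
  else 0

/-- The pairs of distinct positive points, at which all heat blocks extend by `0` across `s = 0`. -/
def offDiagonal : Set (ℝ × ℝ) :=
  {p | 0 < p.1 ∧ 0 < p.2 ∧ p.1 ≠ p.2}

section HeatBlock

lemma isOpen_offDiagonal : IsOpen offDiagonal :=
  (isOpen_lt continuous_const continuous_fst).inter
    ((isOpen_lt continuous_const continuous_snd).inter
      (isOpen_ne_fun continuous_fst continuous_snd))

lemma heatBlock_of_pos {s : ℝ} (hs : 0 < s) (z ζ ν m : ℝ) :
    heatBlock s z ζ ν m = s ^ (-m) * exp (-(z ^ 2 + ζ ^ 2) / (2 * s)) *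
      besselClifford ν (z ^ 2 * ζ ^ 2 / (4 * s ^ 2)) :=
  if_pos hs

lemma heatBlock_of_nonpos {s : ℝ} (hs : s ≤ 0) (z ζ ν m : ℝ) : heatBlock s z ζ ν m = 0 :=
  if_neg hs.not_gt

lemma heatBlock_comm (s z ζ ν m : ℝ) : heatBlock s z ζ ν m = heatBlock s ζ z ν m := by
  simp only [heatBlock, add_comm (z ^ 2), mul_comm (z ^ 2)]

lemma heatBlock_add_natCast (s z ζ ν m : ℝ) (n : ℕ) :
    heatBlock s z ζ ν (m + n) = heatBlock s z ζ ν m / s ^ n := by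
  rcases lt_or_ge 0 s with hs | hs
  · rw [heatBlock_of_pos hs, heatBlock_of_pos hs, neg_add', rpow_sub_natCast hs.ne']
    ring
  · simp only [heatBlock_of_nonpos hs, zero_div]

lemma heatBlock_add_one (s z ζ ν m : ℝ) :
    heatBlock s z ζ ν (m + 1) = heatBlock s z ζ ν m / s := by
  simpa using heatBlock_add_natCast s z ζ ν m 1

lemma heatBlock_add_two (s z ζ ν m : ℝ) :
    heatBlock s z ζ ν (m + 2) = heatBlock s z ζ ν m / s ^ 2 :=
  heatBlock_add_natCast s z ζ ν m 2

lemma heatBlock_add_three (s z ζ ν m : ℝ) :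
    heatBlock s z ζ ν (m + 3) = heatBlock s z ζ ν m / s ^ 3 :=
  heatBlock_add_natCast s z ζ ν m 3

lemma heatBlock_eq (s z ζ ν m : ℝ) :
    heatBlock s z ζ ν m = (ν + 1) * heatBlock s z ζ (ν + 1) m
      + z ^ 2 * ζ ^ 2 / 4 * heatBlock s z ζ (ν + 1 + 1) (m + 2) := by
  rcases lt_or_ge 0 s with hs | hs
  · rw [heatBlock_add_two]
    simp only [heatBlock_of_pos hs]
    rw [besselClifford_eq]
    field_simp
  · simp only [heatBlock_of_nonpos hs, mul_zero, add_zero]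

lemma norm_heatBlock_le {ν s z ζ : ℝ} (m : ℝ) (hν : 0 ≤ ν) (hs : 0 < s) (hz : 0 ≤ z)
    (hζ : 0 ≤ ζ) :
    ‖heatBlock s z ζ ν m‖ ≤ (Gamma (ν + 1))⁻¹ * (s ^ (-m) * exp (-((z - ζ) ^ 2 / 2) / s)) := by
  have hw : z ^ 2 * ζ ^ 2 / (4 * s ^ 2) = (z * ζ / s) ^ 2 / 4 := by field_simp
  have hexp : -((z - ζ) ^ 2 / 2) / s = -(z ^ 2 + ζ ^ 2) / (2 * s) + z * ζ / s := by
    field_simp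
    ring
  have hnonneg : 0 ≤ besselClifford ν ((z * ζ / s) ^ 2 / 4) :=
    besselClifford_nonneg hν (by positivity)
  rw [heatBlock_of_pos hs, hw, hexp, exp_add, norm_of_nonneg (by positivity)]
  calc _ ≤ s ^ (-m) * exp (-(z ^ 2 + ζ ^ 2) / (2 * s)) *
        ((Gamma (ν + 1))⁻¹ * exp (z * ζ / s)) := by
        gcongr
        exact besselClifford_sq_div_four_le hν (by positivity)
    _ = _ := by ring

lemma tendsto_rpow_neg_mul_exp_neg_div_nhdsGT (m : ℝ) {c : ℝ} (hc : 0 < c) :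
    Tendsto (fun s : ℝ => s ^ (-m) * exp (-c / s)) (𝓝[>] 0) (𝓝 0) := by
  refine ((tendsto_rpow_mul_exp_neg_mul_atTop_nhds_zero m c hc).comp
    tendsto_inv_nhdsGT_zero).congr' ?_
  filter_upwards [self_mem_nhdsWithin] with s hs
  rw [Function.comp_apply, inv_rpow (mem_Ioi.1 hs).le, rpow_neg (mem_Ioi.1 hs).le, div_eq_mul_inv]

lemma tendsto_heatBlock_zero {ν z ζ : ℝ} (m : ℝ) (hν : 0 ≤ ν) (hp : (z, ζ) ∈ offDiagonal) :
    Tendsto (fun p : ℝ × ℝ × ℝ => heatBlock p.1 p.2.1 p.2.2 ν m) (𝓝 (0, z, ζ)) (𝓝 0) := by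
  obtain ⟨hz, hζ, hne⟩ := hp
  simp only [heatBlock]
  refine Tendsto.if ?_ tendsto_const_nhds
  set c := (z - ζ) ^ 2 / 4 with hc_def
  have hc : 0 < c := by have := sub_ne_zero.2 hne; positivity
  have hfst : Tendsto Prod.fst (𝓝 ((0 : ℝ), z, ζ) ⊓ 𝓟 {p | 0 < p.1}) (𝓝[>] 0) :=
    continuousAt_fst.tendsto.inf (tendsto_principal_principal.2 fun _ hp => hp)
  have hmajorant := ((tendsto_rpow_neg_mul_exp_neg_div_nhdsGT m hc).comp hfst).const_mul
    (Gamma (ν + 1))⁻¹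
  rw [mul_zero] at hmajorant
  refine squeeze_zero_norm' ?_ hmajorant
  have hc_lt : c < (z - ζ) ^ 2 / 2 := by linarith
  have hnear : ∀ᶠ p : ℝ × ℝ × ℝ in 𝓝 (0, z, ζ),
      c < (p.2.1 - p.2.2) ^ 2 / 2 ∧ 0 < p.2.1 ∧ 0 < p.2.2 :=
    (ContinuousAt.eventually_lt (by fun_prop) (by fun_prop) hc_lt).and
      ((ContinuousAt.eventually_lt (by fun_prop) (by fun_prop) hz).and
        (ContinuousAt.eventually_lt (by fun_prop) (by fun_prop) hζ))
  filter_upwards [hnear.filter_mono inf_le_left, mem_inf_of_right (mem_principal_self _)]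
    with p ⟨hcp, hp1, hp2⟩ (hs : 0 < p.1)
  rw [← heatBlock_of_pos hs]
  have := Gamma_pos_of_pos (show 0 < ν + 1 by linarith)
  refine (norm_heatBlock_le m hν hs hp1.le hp2.le).trans ?_
  simp only [Function.comp_apply]
  gcongr

lemma continuousAt_heatBlock_of_ne_zero {s : ℝ} (hs : s ≠ 0) (z ζ ν m : ℝ) :
    ContinuousAt (fun p : ℝ × ℝ × ℝ => heatBlock p.1 p.2.1 p.2.2 ν m) (s, z, ζ) := by
  rcases hs.lt_or_gt with hs | hs
  · refine (continuousAt_const (y := (0 : ℝ))).congr ?_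
    filter_upwards [continuousAt_fst.eventually_lt_const hs] with p hp
    exact (heatBlock_of_nonpos hp.le _ _ _ _).symm
  · have hformula : ContinuousAt (fun p : ℝ × ℝ × ℝ => p.1 ^ (-m) *
        exp (-(p.2.1 ^ 2 + p.2.2 ^ 2) / (2 * p.1)) *
        besselClifford ν (p.2.1 ^ 2 * p.2.2 ^ 2 / (4 * p.1 ^ 2))) (s, z, ζ) := by
      refine ((continuousAt_fst.rpow_const (.inl hs.ne')).mul ?_).mul
        ((continuous_besselClifford ν).continuousAt.comp ?_)
      · fun_prop (disch := simp [hs.ne'])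
      · fun_prop (disch := simp [hs.ne'])
    refine hformula.congr ?_
    filter_upwards [continuousAt_fst.eventually_const_lt hs] with p hp
    exact (heatBlock_of_pos hp _ _ _ _).symm

lemma continuousOn_heatBlock_of_nonneg {ν : ℝ} (m : ℝ) (hν : 0 ≤ ν) :
    ContinuousOn (fun p : ℝ × ℝ × ℝ => heatBlock p.1 p.2.1 p.2.2 ν m) (univ ×ˢ offDiagonal) := by
  rintro ⟨s, z, ζ⟩ ⟨-, hp⟩
  refine ContinuousAt.continuousWithinAt ?_
  obtain rfl | hs := eq_or_ne s 0
  · simpa only [ContinuousAt, heatBlock_of_nonpos le_rfl] using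
      tendsto_heatBlock_zero m hν hp
  · exact continuousAt_heatBlock_of_ne_zero hs z ζ ν m

/-- Reduced to `0 ≤ ν`, where the Bessel–Clifford function is positive, by the recurrence. -/
lemma continuousOn_heatBlock (ν m : ℝ) :
    ContinuousOn (fun p : ℝ × ℝ × ℝ => heatBlock p.1 p.2.1 p.2.2 ν m) (univ ×ˢ offDiagonal) := by
  suffices H : ∀ (n : ℕ) (ν m : ℝ), 0 ≤ ν + n → ContinuousOn
      (fun p : ℝ × ℝ × ℝ => heatBlock p.1 p.2.1 p.2.2 ν m) (univ ×ˢ offDiagonal) by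
    obtain ⟨n, hn⟩ := exists_nat_ge (-ν)
    exact H n ν m (by linarith)
  intro n
  induction n with
  | zero => exact fun ν m hν => continuousOn_heatBlock_of_nonneg m (by simpa using hν)
  | succ n ih =>
    intro ν m hν
    push_cast at hν
    refine ContinuousOn.congr ?_ fun p _ => heatBlock_eq p.1 p.2.1 p.2.2 ν m
    exact ((ih (ν + 1) m (by linarith)).const_mul _).add
      ((by fun_prop : ContinuousOn (fun p : ℝ × ℝ × ℝ => p.2.1 ^ 2 * p.2.2 ^ 2 / 4) _).mul
        (ih (ν + 1 + 1) (m + 2) (by linarith)))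

end HeatBlock

/-- The operator `z⁻¹ ∂_z` on heat blocks, acting on families indexed by `(ν, m)`. -/
noncomputable def radialDeriv (ζ : ℝ) (c : ℝ → ℝ → ℝ) (ν m : ℝ) : ℝ :=
  -c ν (m + 1) + ζ ^ 2 / 2 * c (ν + 1) (m + 2)

/-- The time derivative of the heat block of index `(ν, m)`. -/
noncomputable def heatBlockTimeDeriv (s z ζ ν m : ℝ) : ℝ :=
  -m * heatBlock s z ζ ν (m + 1) + (z ^ 2 + ζ ^ 2) / 2 * heatBlock s z ζ ν (m + 2)
    - z ^ 2 * ζ ^ 2 / 2 * heatBlock s z ζ (ν + 1) (m + 3)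

section Derivatives

lemma continuousOn_radialDeriv {X : Type*} [TopologicalSpace X] {S : Set X} {ζ : X → ℝ}
    {c : X → ℝ → ℝ → ℝ} (hζ : ContinuousOn ζ S) (hc : ∀ ν m, ContinuousOn (fun x => c x ν m) S)
    (ν m : ℝ) : ContinuousOn (fun x => radialDeriv (ζ x) (c x) ν m) S :=
  (hc ν (m + 1)).neg.add (((hζ.pow 2).div_const 2).mul (hc (ν + 1) (m + 2)))

lemma hasDerivAt_mul_radialDeriv {ζ x a : ℝ} {c : ℝ → ℝ → ℝ → ℝ} {c' : ℝ → ℝ → ℝ}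
    (hc : ∀ ν m, HasDerivAt (fun x => c x ν m) (a * c' ν m) x) (ν m : ℝ) :
    HasDerivAt (fun x => radialDeriv ζ (c x) ν m) (a * radialDeriv ζ c' ν m) x := by
  convert! (hc ν (m + 1)).neg.add ((hc (ν + 1) (m + 2)).const_mul (ζ ^ 2 / 2)) using 1
  rw [radialDeriv]
  ring

lemma hasDerivAt_heatBlock_left (s z ζ ν m : ℝ) :
    HasDerivAt (fun z => heatBlock s z ζ ν m) (z * radialDeriv ζ (heatBlock s z ζ) ν m) z := by
  rw [radialDeriv, heatBlock_add_one, heatBlock_add_two]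
  rcases lt_or_ge 0 s with hs | hs
  · simp only [heatBlock_of_pos hs]
    have hexp : HasDerivAt (fun z : ℝ => -(z ^ 2 + ζ ^ 2) / (2 * s)) (-z / s) z := by
      convert! (((hasDerivAt_pow 2 z).add_const (ζ ^ 2)).neg).div_const (2 * s) using 1
      field_simp
      ring
    have harg : HasDerivAt (fun z : ℝ => z ^ 2 * ζ ^ 2 / (4 * s ^ 2))
        (z * ζ ^ 2 / (2 * s ^ 2)) z := by
      convert! ((hasDerivAt_pow 2 z).mul_const (ζ ^ 2)).div_const (4 * s ^ 2) using 1
      field_simp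
      ring
    convert! (hexp.exp.const_mul (s ^ (-m))).mul
      ((hasDerivAt_besselClifford ν _).comp z harg) using 1
    simp only [Function.comp_apply]
    field_simp
  · simpa only [heatBlock_of_nonpos hs, zero_div, neg_zero, mul_zero, add_zero] using
      hasDerivAt_const z (0 : ℝ)

lemma hasDerivAt_heatBlock_right (s z ζ ν m : ℝ) :
    HasDerivAt (fun ζ => heatBlock s z ζ ν m) (ζ * radialDeriv z (heatBlock s z ζ) ν m) ζ := by
  have hcomm : heatBlock s z ζ = heatBlock s ζ z := by
    funext ν m
    exact heatBlock_comm s z ζ ν m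
  simpa only [hcomm, heatBlock_comm s z] using hasDerivAt_heatBlock_left s ζ z ν m

lemma continuousOn_heatBlockTimeDeriv (ν m : ℝ) :
    ContinuousOn (fun p : ℝ × ℝ × ℝ => heatBlockTimeDeriv p.1 p.2.1 p.2.2 ν m)
      (univ ×ˢ offDiagonal) := by
  refine (((continuousOn_heatBlock ν (m + 1)).const_mul (-m)).add
    (ContinuousOn.mul ?_ (continuousOn_heatBlock ν (m + 2)))).sub
    (ContinuousOn.mul ?_ (continuousOn_heatBlock (ν + 1) (m + 3))) <;> fun_prop

lemma hasDerivAt_heatBlock_time_of_ne_zero {s : ℝ} (hs : s ≠ 0) (z ζ ν m : ℝ) :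
    HasDerivAt (fun s => heatBlock s z ζ ν m) (heatBlockTimeDeriv s z ζ ν m) s := by
  rw [heatBlockTimeDeriv, heatBlock_add_one, heatBlock_add_two, heatBlock_add_three]
  rcases hs.lt_or_gt with hs | hs
  · simp only [heatBlock_of_nonpos hs.le, zero_div, mul_zero, add_zero, sub_zero]
    refine (hasDerivAt_const s (0 : ℝ)).congr_of_eventuallyEq ?_
    filter_upwards [eventually_lt_nhds hs] with t ht
    exact heatBlock_of_nonpos ht.le z ζ ν m
  · simp only [heatBlock_of_pos hs]
    have hexp : HasDerivAt (fun s : ℝ => -(z ^ 2 + ζ ^ 2) / (2 * s))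
        ((z ^ 2 + ζ ^ 2) / (2 * s ^ 2)) s := by
      convert! (hasDerivAt_const s (-(z ^ 2 + ζ ^ 2))).div ((hasDerivAt_id s).const_mul 2)
        (by positivity) using 1
      simp only [id_eq]
      field_simp
      ring
    have harg : HasDerivAt (fun s : ℝ => z ^ 2 * ζ ^ 2 / (4 * s ^ 2))
        (-(z ^ 2 * ζ ^ 2) / (2 * s ^ 3)) s := by
      convert! (hasDerivAt_const s (z ^ 2 * ζ ^ 2)).div ((hasDerivAt_pow 2 s).const_mul 4)
        (by positivity) using 1
      field_simp
      ring
    have hpow : HasDerivAt (fun s : ℝ => s ^ (-m)) (-m * (s ^ (-m) / s)) s := by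
      simpa only [rpow_sub_one hs.ne'] using hasDerivAt_rpow_const (p := -m) (.inl hs.ne')
    refine HasDerivAt.congr_of_eventuallyEq ?_
      (eventually_of_mem (Ioi_mem_nhds hs) fun t ht => heatBlock_of_pos ht z ζ ν m)
    convert! (hpow.mul hexp.exp).mul ((hasDerivAt_besselClifford ν _).comp s harg) using 1
    simp only [Pi.mul_apply, Function.comp_apply]
    field_simp
    ring

lemma hasDerivAt_heatBlock_time {z ζ : ℝ} (hp : (z, ζ) ∈ offDiagonal) (s ν m : ℝ) :
    HasDerivAt (fun s => heatBlock s z ζ ν m) (heatBlockTimeDeriv s z ζ ν m) s := by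
  have hslice {K : ℝ × ℝ × ℝ → ℝ} (hK : ContinuousOn K (univ ×ˢ offDiagonal)) :
      ContinuousAt (fun s => K (s, z, ζ)) 0 :=
    (hK.continuousAt ((isOpen_univ.prod isOpen_offDiagonal).mem_nhds ⟨mem_univ _, hp⟩)).comp
      (f := fun s : ℝ => (s, z, ζ)) (by fun_prop)
  exact hasDerivAt_of_hasDerivAt_of_ne'
    (fun t ht => hasDerivAt_heatBlock_time_of_ne_zero ht z ζ ν m)
    (hslice (continuousOn_heatBlock ν m)) (hslice (continuousOn_heatBlockTimeDeriv ν m)) s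

/-- Heat blocks solve the Bessel equation up to two lower-order terms, which vanish for the
Bessel heat kernel, `ν = b - 1/2` and `m = b + 1/2`. -/
lemma heatBlockTimeDeriv_eq (b s z ζ ν m : ℝ) :
    heatBlockTimeDeriv s z ζ ν m
      = 1 / 2 * (radialDeriv ζ (heatBlock s z ζ) ν m
          + z ^ 2 * radialDeriv ζ (radialDeriv ζ (heatBlock s z ζ)) ν m)
        + b * radialDeriv ζ (heatBlock s z ζ) ν m
        + (b + 1 / 2 - m) * heatBlock s z ζ ν (m + 1)
        + (ν + 1 / 2 - b) * (ζ ^ 2 / 2) * heatBlock s z ζ (ν + 1) (m + 2) := by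
  simp only [heatBlockTimeDeriv, radialDeriv]
  have hrec := heatBlock_eq s z ζ ν (m + 2)
  ring_nf at hrec ⊢
  linear_combination (ζ ^ 2 / 2) * hrec

end Derivatives

/-- The combination of a family indexed by `(ν, m)` which, applied to the heat blocks, yields the
`ζ`-derivative of the Bessel heat kernel. Its coefficients do not involve `s` and `z`. -/
noncomputable def layerCombo (b ζ : ℝ) (c : ℝ → ℝ → ℝ) : ℝ :=
  2 ^ (1 / 2 - b) * ζ ^ (2 * b - 1) *
    (c (b - 1 / 2) (b + 1 / 2) + 2 * c (b - 3 / 2) (b + 1 / 2)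
      - ζ ^ 2 * c (b - 1 / 2) (b + 3 / 2))

/-- The kernel of the double-layer Bessel potential: the `ζ`-derivative of the Bessel heat kernel
for `s ≥ 0`, extended by `0` to `s ≤ 0`. -/
noncomputable def doubleLayerKernel (b s z ζ : ℝ) : ℝ :=
  layerCombo b ζ (heatBlock s z ζ)

section LayerKernel

lemma continuousOn_layerCombo {X : Type*} [TopologicalSpace X] {S : Set X} {ζ : X → ℝ}
    {c : X → ℝ → ℝ → ℝ} (b : ℝ) (hζ : ContinuousOn ζ S) (hζ_ne : ∀ x ∈ S, ζ x ≠ 0)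
    (hc : ∀ ν m, ContinuousOn (fun x => c x ν m) S) :
    ContinuousOn (fun x => layerCombo b (ζ x) (c x)) S :=
  (continuousOn_const.mul (hζ.rpow_const fun x hx => .inl (hζ_ne x hx))).mul
    (((hc _ _).add (continuousOn_const.mul (hc _ _))).sub ((hζ.pow 2).mul (hc _ _)))

lemma hasDerivAt_layerCombo {ζ x : ℝ} {c : ℝ → ℝ → ℝ → ℝ} {c' : ℝ → ℝ → ℝ} (b : ℝ)
    (hc : ∀ ν m, HasDerivAt (fun x => c x ν m) (c' ν m) x) :
    HasDerivAt (fun x => layerCombo b ζ (c x)) (layerCombo b ζ c') x :=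
  (((hc _ _).add ((hc _ _).const_mul 2)).sub ((hc _ _).const_mul (ζ ^ 2))).const_mul _

lemma layerCombo_const_mul (b ζ a : ℝ) (c : ℝ → ℝ → ℝ) :
    layerCombo b ζ (fun ν m => a * c ν m) = a * layerCombo b ζ c := by
  simp only [layerCombo]
  ring

lemma doubleLayerKernel_of_nonpos {s : ℝ} (hs : s ≤ 0) (b z ζ : ℝ) :
    doubleLayerKernel b s z ζ = 0 := by
  simp only [doubleLayerKernel, layerCombo, heatBlock_of_nonpos hs, mul_zero, add_zero, sub_zero]

lemma layerCombo_heatBlockTimeDeriv (b s z ζ : ℝ) :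
    layerCombo b ζ (heatBlockTimeDeriv s z ζ)
      = 1 / 2 * (layerCombo b ζ (radialDeriv ζ (heatBlock s z ζ))
          + z ^ 2 * layerCombo b ζ (radialDeriv ζ (radialDeriv ζ (heatBlock s z ζ))))
        + b * layerCombo b ζ (radialDeriv ζ (heatBlock s z ζ)) := by
  simp only [layerCombo, heatBlockTimeDeriv_eq b]
  ring_nf

lemma besselKernel_prefactor_eq (b : ℝ) {s z ζ : ℝ} (hs : 0 < s) (hz : 0 < z) (hζ : 0 < ζ) :
    √(z * ζ) / s * (ζ / z) ^ b * (z * ζ / s / 2) ^ (b - 1 / 2)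
      = 2 ^ (1 / 2 - b) * ζ ^ (2 * b) * s ^ (-(b + 1 / 2)) := by
  have hpow_mul : √(z * ζ) * (z * ζ) ^ (b - 1 / 2) = (z * ζ) ^ b := by
    rw [sqrt_eq_rpow, ← rpow_add (by positivity), add_sub_cancel]
  have hpow_ζ : (ζ / z) ^ b * (z * ζ) ^ b = ζ ^ (2 * b) := by
    rw [← mul_rpow (by positivity) (by positivity), rpow_mul hζ.le, rpow_two]
    congr 1
    field_simp
  have hpow_s : s ^ (-(b + 1 / 2)) = (s ^ (b - 1 / 2))⁻¹ / s := by
    rw [← rpow_neg hs.le, ← rpow_sub_one hs.ne']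
    congr 1
    ring
  have hpow_two : (2 : ℝ) ^ (1 / 2 - b) = (2 ^ (b - 1 / 2))⁻¹ := by
    rw [← rpow_neg zero_le_two, neg_sub]
  rw [← hpow_ζ, ← hpow_mul, hpow_s, hpow_two, div_rpow (by positivity) zero_le_two,
    div_rpow (by positivity) hs.le]
  field_simp

lemma besselKernel_eq (b : ℝ) {s z ζ : ℝ} (hs : 0 ≤ s) (hz : 0 < z) (hζ : 0 < ζ) :
    besselKernel b s z ζ
      = 2 ^ (1 / 2 - b) * ζ ^ (2 * b) * heatBlock s z ζ (b - 1 / 2) (b + 1 / 2) := by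
  rcases hs.eq_or_lt with rfl | hs
  · simp only [besselKernel, heatBlock_of_nonpos le_rfl, div_zero, zero_mul, mul_zero]
  · have harg : (z * ζ / s) ^ 2 / 4 = z ^ 2 * ζ ^ 2 / (4 * s ^ 2) := by field_simp
    rw [besselKernel, besselI_eq _ (by positivity), heatBlock_of_pos hs, harg]
    linear_combination exp (-(z ^ 2 + ζ ^ 2) / (2 * s)) *
      besselClifford (b - 1 / 2) (z ^ 2 * ζ ^ 2 / (4 * s ^ 2)) *
      besselKernel_prefactor_eq b hs hz hζ

/-- The recurrence at `ν = b - 3/2` absorbs the factor `z²` produced by differentiating in `ζ`. -/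
lemma hasDerivAt_besselKernel (b : ℝ) {s z ζ : ℝ} (hs : 0 ≤ s) (hz : 0 < z) (hζ : 0 < ζ) :
    HasDerivAt (besselKernel b s z) (doubleLayerKernel b s z ζ) ζ := by
  have heq : besselKernel b s z =ᶠ[𝓝 ζ] fun ζ =>
      2 ^ (1 / 2 - b) * ζ ^ (2 * b) * heatBlock s z ζ (b - 1 / 2) (b + 1 / 2) := by
    filter_upwards [lt_mem_nhds hζ] with x hx using besselKernel_eq b hs hz hx
  refine HasDerivAt.congr_of_eventuallyEq ?_ heq
  convert! ((hasDerivAt_rpow_const (p := 2 * b) (.inl hζ.ne')).const_mul _).mul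
    (hasDerivAt_heatBlock_right s z ζ (b - 1 / 2) (b + 1 / 2)) using 1
  have hrec := heatBlock_eq s z ζ (b - 3 / 2) (b + 1 / 2)
  rw [show ζ ^ (2 * b) = ζ ^ (2 * b - 1) * ζ by rw [rpow_sub_one hζ.ne']; field_simp]
  simp only [doubleLayerKernel, layerCombo, radialDeriv]
  generalize ζ ^ (2 * b - 1) = P
  ring_nf at hrec ⊢
  linear_combination 2 * 2 ^ (1 / 2 - b) * P * hrec

end LayerKernel

section ParametricIntegral

variable {E : Type*} [NormedAddCommGroup E] [NormedSpace ℝ E]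

lemma continuousOn_intervalIntegral_param {X : Type*} [TopologicalSpace X] {f : X → ℝ → E}
    {V : Set X} {a b : ℝ} (hab : a ≤ b)
    (hf : ContinuousOn (fun p : X × ℝ => f p.1 p.2) (V ×ˢ Icc a b)) :
    ContinuousOn (fun x => ∫ k in a..b, f x k) V := by
  rw [continuousOn_iff_continuous_domRestrict]
  have hext : Continuous fun p : V × ℝ => f p.1 (projIcc a b hab p.2) :=
    hf.comp_continuous (f := fun p : V × ℝ => ((p.1 : X), (projIcc a b hab p.2 : ℝ)))
      (by fun_prop) fun p => ⟨p.1.2, (projIcc a b hab p.2).2⟩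
  refine (intervalIntegral.continuous_parametric_intervalIntegral_of_continuous'
    (f := fun (x : V) k => f x (projIcc a b hab k)) hext a b).congr
    fun x => intervalIntegral.integral_congr fun k hk => ?_
  rw [uIcc_of_le hab] at hk
  simp only [projIcc_of_mem hab hk]

lemma hasDerivAt_intervalIntegral_param {𝕜 : Type*} [RCLike 𝕜] [NormedSpace 𝕜 E]
    {f f' : 𝕜 → ℝ → E} {V : Set 𝕜} {a b : ℝ} {x : 𝕜} (hab : a ≤ b) (hV : IsOpen V) (hx : x ∈ V)
    (hf : ContinuousOn (fun p : 𝕜 × ℝ => f p.1 p.2) (V ×ˢ Icc a b))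
    (hf' : ContinuousOn (fun p : 𝕜 × ℝ => f' p.1 p.2) (V ×ˢ Icc a b))
    (hderiv : ∀ x ∈ V, ∀ k ∈ Icc a b, HasDerivAt (fun x => f x k) (f' x k) x) :
    HasDerivAt (fun x => ∫ k in a..b, f x k) (∫ k in a..b, f' x k) x := by
  obtain ⟨N, hN, hNV, hNc⟩ := local_compact_nhds (hV.mem_nhds hx)
  obtain ⟨C, hC⟩ := (hNc.prod isCompact_Icc).exists_bound_of_continuousOn
    (hf'.mono (prod_mono_left hNV))
  have hslice {g : 𝕜 → ℝ → E} (hg : ContinuousOn (fun p : 𝕜 × ℝ => g p.1 p.2) (V ×ˢ Icc a b))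
      {x : 𝕜} (hx : x ∈ V) : IntervalIntegrable (g x) volume a b :=
    ContinuousOn.intervalIntegrable_of_Icc hab <|
      hg.comp (f := fun k => (x, k)) (by fun_prop) fun k hk => ⟨hx, hk⟩
  have hIcc : ∀ k ∈ uIoc a b, k ∈ Icc a b := fun k hk =>
    Ioc_subset_Icc_self (uIoc_of_le hab ▸ hk)
  refine (intervalIntegral.hasDerivAt_integral_of_dominated_loc_of_deriv_le
    (F := f) (F' := f') (bound := fun _ => C) hN ?_ (hslice hf hx)
    (hslice hf' hx).def'.aestronglyMeasurable ?_ intervalIntegrable_const ?_).2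
  · filter_upwards [hV.mem_nhds hx] with y hy using (hslice hf hy).def'.aestronglyMeasurable
  · exact .of_forall fun k hk y hy => hC (y, k) ⟨hy, hIcc k hk⟩
  · exact .of_forall fun k hk y hy => hderiv y (hNV hy) k (hIcc k hk)

end ParametricIntegral

lemma contDiffAt_succ_of_hasDerivAt {𝕜 F : Type*} [NontriviallyNormedField 𝕜]
    [NormedAddCommGroup F] [NormedSpace 𝕜 F] {f f' : 𝕜 → F} {x : 𝕜} {n : ℕ}
    (hf : ∀ᶠ y in 𝓝 x, HasDerivAt f (f' y) y) (hf' : ContDiffAt 𝕜 n f' x) :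
    ContDiffAt 𝕜 (n + 1) f x :=
  contDiffAt_succ_iff_hasFDerivAt.2 ⟨fun y => .toSpanSingleton 𝕜 (f' y),
    ⟨_, hf, fun _ hy => hy.hasFDerivAt⟩,
    (ContinuousLinearMap.toSpanSingletonCLE (𝕜 := 𝕜) (E := F)).contDiff.contDiffAt.comp x hf'⟩

/-- `q` is a classical solution at the point `(τ, z)` of the Bessel equation
`∂_τ q = ½ ∂_z² q + (b/z) ∂_z q`, being `C¹` in time and `C²` in space there. -/
def SolvesBesselPDEAt (b : ℝ) (q : ℝ → ℝ → ℝ) (τ z : ℝ) : Prop :=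
  ContDiffAt ℝ 1 (fun t => q t z) τ ∧
  ContDiffAt ℝ 2 (fun w => q τ w) z ∧
  deriv (fun t => q t z) τ
    = 1 / 2 * deriv (fun w => deriv (fun w' => q τ w') w) z
      + b / z * deriv (fun w => q τ w) z

section SolvesBesselPDEAt

variable {b τ z : ℝ} {q q' : ℝ → ℝ → ℝ}

lemma solvesBesselPDEAt_of_hasDerivAt {qt qz qzz : ℝ → ℝ}
    (ht : ∀ᶠ t in 𝓝 τ, HasDerivAt (fun t => q t z) (qt t) t) (hqt : ContDiffAt ℝ 0 qt τ)
    (hz : ∀ᶠ w in 𝓝 z, HasDerivAt (fun w => q τ w) (qz w) w)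
    (hzz : ∀ᶠ w in 𝓝 z, HasDerivAt qz (qzz w) w) (hqzz : ContDiffAt ℝ 0 qzz z)
    (hpde : qt τ = 1 / 2 * qzz z + b / z * qz z) : SolvesBesselPDEAt b q τ z := by
  refine ⟨contDiffAt_succ_of_hasDerivAt (n := 0) ht hqt,
    contDiffAt_succ_of_hasDerivAt (n := 1) hz (contDiffAt_succ_of_hasDerivAt (n := 0) hzz hqzz), ?_⟩
  have hz' : (fun w => deriv (fun w' => q τ w') w) =ᶠ[𝓝 z] qz := hz.mono fun w hw => hw.deriv
  rw [ht.self_of_nhds.deriv, hz'.deriv_eq, hzz.self_of_nhds.deriv, hz.self_of_nhds.deriv, hpde]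

lemma SolvesBesselPDEAt.congr (hq : SolvesBesselPDEAt b q τ z)
    (heq : ∀ᶠ p : ℝ × ℝ in 𝓝 (τ, z), q' p.1 p.2 = q p.1 p.2) : SolvesBesselPDEAt b q' τ z := by
  obtain ⟨hC1, hC2, hpde⟩ := hq
  have ht : (fun t => q' t z) =ᶠ[𝓝 τ] fun t => q t z :=
    heq.curry_nhds.mono fun _ h => h.self_of_nhds
  have hz : (fun w => q' τ w) =ᶠ[𝓝 z] fun w => q τ w := heq.curry_nhds.self_of_nhds
  refine ⟨hC1.congr_of_eventuallyEq ht, hC2.congr_of_eventuallyEq hz, ?_⟩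
  rw [ht.deriv_eq, hz.deriv_eq, hz.deriv.deriv_eq, hpde]

lemma SolvesBesselPDEAt.add (hq : SolvesBesselPDEAt b q τ z) (hq' : SolvesBesselPDEAt b q' τ z) :
    SolvesBesselPDEAt b (fun t w => q t w + q' t w) τ z := by
  obtain ⟨hC1, hC2, hpde⟩ := hq
  obtain ⟨hC1', hC2', hpde'⟩ := hq'
  refine ⟨hC1.add hC1', hC2.add hC2', ?_⟩
  have hsecond (f : ℝ → ℝ) : deriv (fun w => deriv f w) = iteratedDeriv 2 f := by
    rw [iteratedDeriv_succ, iteratedDeriv_one]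
  simp only [hsecond] at hpde hpde' ⊢
  rw [iteratedDeriv_fun_add hC2 hC2',
    deriv_fun_add (hC1.differentiableAt one_ne_zero) (hC1'.differentiableAt one_ne_zero),
    deriv_fun_add (hC2.differentiableAt two_ne_zero) (hC2'.differentiableAt two_ne_zero),
    hpde, hpde']
  ring

end SolvesBesselPDEAt

/-- A causal kernel `K s z ζ` on `ℝ × U` with time derivative `Ks` and space derivatives `Kz`,
`Kzz`: it vanishes for `s ≤ 0`, and in `(s, z)` it is a classical solution of the Bessel equation,
across `s = 0` included. -/
structure IsCausalBesselKernel (b : ℝ) (U : Set (ℝ × ℝ)) (K Ks Kz Kzz : ℝ → ℝ → ℝ → ℝ) :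
    Prop where
  eq_zero_of_nonpos : ∀ s ≤ 0, ∀ z ζ, K s z ζ = 0
  continuousOn : ContinuousOn (fun p : ℝ × ℝ × ℝ => K p.1 p.2.1 p.2.2) (univ ×ˢ U)
  continuousOn_time : ContinuousOn (fun p : ℝ × ℝ × ℝ => Ks p.1 p.2.1 p.2.2) (univ ×ˢ U)
  continuousOn_space : ContinuousOn (fun p : ℝ × ℝ × ℝ => Kz p.1 p.2.1 p.2.2) (univ ×ˢ U)
  continuousOn_space_space : ContinuousOn (fun p : ℝ × ℝ × ℝ => Kzz p.1 p.2.1 p.2.2) (univ ×ˢ U)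
  hasDerivAt_time : ∀ s z ζ, (z, ζ) ∈ U → HasDerivAt (fun s => K s z ζ) (Ks s z ζ) s
  hasDerivAt_space : ∀ s z ζ, (z, ζ) ∈ U → HasDerivAt (fun z => K s z ζ) (Kz s z ζ) z
  hasDerivAt_space_space : ∀ s z ζ, (z, ζ) ∈ U → HasDerivAt (fun z => Kz s z ζ) (Kzz s z ζ) z
  pde : ∀ s z ζ, (z, ζ) ∈ U → Ks s z ζ = 1 / 2 * Kzz s z ζ + b / z * Kz s z ζ

/-- The potential at time `t` and position `w` of a layer of density `ψ` moving along the curve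
`u`, for the kernel `K`. -/
noncomputable def layerPotential (K : ℝ → ℝ → ℝ → ℝ) (ψ u : ℝ → ℝ) (t w : ℝ) : ℝ :=
  ∫ k in (0 : ℝ)..t, ψ k * K (t - k) w (u k)

section LayerPotential

variable {b : ℝ} {U : Set (ℝ × ℝ)} {K Ks Kz Kzz : ℝ → ℝ → ℝ → ℝ} {ψ u : ℝ → ℝ}

lemma continuousOn_layerIntegrand {X : Type*} [TopologicalSpace X] {S : Set X} {I : Set ℝ}
    {t w k : X → ℝ} (hK : ContinuousOn (fun p : ℝ × ℝ × ℝ => K p.1 p.2.1 p.2.2) (univ ×ˢ U))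
    (hψ : ContinuousOn ψ I) (hu : ContinuousOn u I) (ht : ContinuousOn t S)
    (hw : ContinuousOn w S) (hk : ContinuousOn k S) (hkI : MapsTo k S I)
    (hU : ∀ x ∈ S, (w x, u (k x)) ∈ U) :
    ContinuousOn (fun x => ψ (k x) * K (t x - k x) (w x) (u (k x))) S :=
  (hψ.comp hk hkI).mul (hK.comp (f := fun x => (t x - k x, w x, u (k x)))
    ((ht.sub hk).prodMk (hw.prodMk (hu.comp hk hkI))) fun x hx => ⟨mem_univ _, hU x hx⟩)

lemma exists_horizon_and_nhds {T τ z : ℝ} (hU : IsOpen U) (hu : ContinuousOn u (Icc 0 T))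
    (hτ : τ ∈ Ioo 0 T) (hz : ∀ k ∈ Icc 0 τ, (z, u k) ∈ U) :
    ∃ A ∈ Ioo τ T, ∃ V, IsOpen V ∧ z ∈ V ∧ ∀ w ∈ V, ∀ k ∈ Icc 0 A, (w, u k) ∈ U := by
  have huτ : ContinuousAt u τ := hu.continuousAt (Icc_mem_nhds hτ.1 hτ.2)
  have hnear : ∀ᶠ k in 𝓝 τ, (z, u k) ∈ U ∧ k < T :=
    ((continuousAt_const.prodMk huτ).eventually_mem (hU.mem_nhds (hz τ ⟨hτ.1.le, le_rfl⟩))).and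
      (eventually_lt_nhds hτ.2)
  obtain ⟨l, r, ⟨hl, hr⟩, hlr⟩ := mem_nhds_iff_exists_Ioo_subset.1 hnear
  obtain ⟨A, hτA, hAr⟩ := exists_between hr
  have hAT : A < T := (hlr ⟨hl.trans hτA, hAr⟩).2
  have hzA : ∀ k ∈ Icc 0 A, (z, u k) ∈ U := fun k hk => by
    rcases le_or_gt k τ with hkτ | hkτ
    · exact hz k ⟨hk.1, hkτ⟩
    · exact (hlr ⟨hl.trans hkτ, hk.2.trans_lt hAr⟩).1
  have hcompact : IsCompact (u '' Icc 0 A) :=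
    isCompact_Icc.image_of_continuousOn (hu.mono (Icc_subset_Icc_right hAT.le))
  obtain ⟨V, W, hV, -, hzV, hW, hVW⟩ := generalized_tube_lemma (isCompact_singleton (x := z))
    hcompact hU (by rintro ⟨_, _⟩ ⟨rfl, k, hk, rfl⟩; exact hzA k hk)
  exact ⟨A, ⟨hτA, hAT⟩, V, hV, hzV rfl, fun w hw k hk => hVW ⟨hw, hW ⟨k, hk, rfl⟩⟩⟩

lemma layerPotential_eq_integral_horizon {A t : ℝ} (hK : ∀ s ≤ 0, ∀ z ζ, K s z ζ = 0)
    (ht : t ∈ Icc 0 A) (w : ℝ) :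
    layerPotential K ψ u t w = ∫ k in (0 : ℝ)..A, ψ k * K (t - k) w (u k) := by
  rw [layerPotential, intervalIntegral.integral_of_le ht.1,
    intervalIntegral.integral_of_le (ht.1.trans ht.2)]
  refine (setIntegral_eq_of_subset_of_forall_sdiff_eq_zero measurableSet_Ioc
    (Ioc_subset_Ioc_right ht.2) fun k hk => ?_).symm
  have htk : t < k := not_le.1 fun hkt => hk.2 ⟨hk.1.1, hkt⟩
  rw [hK _ (sub_nonpos.2 htk.le), mul_zero]

lemma eventually_forall_Icc_mem {T τ z : ℝ} (hU : IsOpen U) (hu : ContinuousOn u (Icc 0 T))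
    (hτ : τ ∈ Ioo 0 T) (hz : ∀ k ∈ Icc 0 τ, (z, u k) ∈ U) :
    ∀ᶠ p : ℝ × ℝ in 𝓝 (τ, z), p.1 ∈ Icc 0 T ∧ ∀ k ∈ Icc 0 p.1, (p.2, u k) ∈ U := by
  obtain ⟨A, ⟨hτA, hAT⟩, V, hV, hzV, hVA⟩ := exists_horizon_and_nhds hU hu hτ hz
  filter_upwards [prod_mem_nhds (Icc_mem_nhds hτ.1 hτA) (hV.mem_nhds hzV)] with p ⟨ht, hw⟩
  exact ⟨Icc_subset_Icc_right hAT.le ht, fun k hk => hVA _ hw k (Icc_subset_Icc_right ht.2 hk)⟩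

namespace IsCausalBesselKernel

variable {A τ z : ℝ}

lemma integral_time_eq (hK : IsCausalBesselKernel b U K Ks Kz Kzz) (hA : 0 ≤ A)
    (hψ : ContinuousOn ψ (Icc 0 A)) (hu : ContinuousOn u (Icc 0 A))
    (hz : ∀ k ∈ Icc 0 A, (z, u k) ∈ U) :
    ∫ k in (0 : ℝ)..A, ψ k * Ks (τ - k) z (u k)
      = 1 / 2 * (∫ k in (0 : ℝ)..A, ψ k * Kzz (τ - k) z (u k))
        + b / z * ∫ k in (0 : ℝ)..A, ψ k * Kz (τ - k) z (u k) := by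
  have hint {J : ℝ → ℝ → ℝ → ℝ}
      (hJ : ContinuousOn (fun p : ℝ × ℝ × ℝ => J p.1 p.2.1 p.2.2) (univ ×ˢ U)) :
      IntervalIntegrable (fun k => ψ k * J (τ - k) z (u k)) volume 0 A :=
    ContinuousOn.intervalIntegrable_of_Icc hA <| continuousOn_layerIntegrand hJ hψ hu
      continuousOn_const continuousOn_const continuousOn_id (mapsTo_id _) hz
  rw [← intervalIntegral.integral_const_mul, ← intervalIntegral.integral_const_mul,
    ← intervalIntegral.integral_add ((hint hK.continuousOn_space_space).const_mul _)
      ((hint hK.continuousOn_space).const_mul _)]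
  refine intervalIntegral.integral_congr fun k hk => ?_
  rw [uIcc_of_le hA] at hk
  simp only [hK.pde _ z (u k) (hz k hk)]
  ring

lemma solvesBesselPDEAt_integral_horizon (hK : IsCausalBesselKernel b U K Ks Kz Kzz) (hA : 0 ≤ A)
    (hψ : ContinuousOn ψ (Icc 0 A)) (hu : ContinuousOn u (Icc 0 A)) {V : Set ℝ} (hV : IsOpen V)
    (hzV : z ∈ V) (hVA : ∀ w ∈ V, ∀ k ∈ Icc 0 A, (w, u k) ∈ U) :
    SolvesBesselPDEAt b (fun t w => ∫ k in (0 : ℝ)..A, ψ k * K (t - k) w (u k)) τ z := by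
  have hcont_time {J : ℝ → ℝ → ℝ → ℝ}
      (hJ : ContinuousOn (fun p : ℝ × ℝ × ℝ => J p.1 p.2.1 p.2.2) (univ ×ˢ U)) :
      ContinuousOn (fun p : ℝ × ℝ => ψ p.2 * J (p.1 - p.2) z (u p.2)) (univ ×ˢ Icc 0 A) :=
    continuousOn_layerIntegrand hJ hψ hu continuousOn_fst continuousOn_const continuousOn_snd
      (fun p hp => hp.2) fun p hp => hVA z hzV p.2 hp.2
  have hcont_space {J : ℝ → ℝ → ℝ → ℝ}
      (hJ : ContinuousOn (fun p : ℝ × ℝ × ℝ => J p.1 p.2.1 p.2.2) (univ ×ˢ U)) :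
      ContinuousOn (fun p : ℝ × ℝ => ψ p.2 * J (τ - p.2) p.1 (u p.2)) (V ×ˢ Icc 0 A) :=
    continuousOn_layerIntegrand hJ hψ hu continuousOn_const continuousOn_fst continuousOn_snd
      (fun p hp => hp.2) fun p hp => hVA p.1 hp.1 p.2 hp.2
  refine solvesBesselPDEAt_of_hasDerivAt
    (.of_forall fun t => hasDerivAt_intervalIntegral_param hA isOpen_univ (mem_univ t)
      (hcont_time hK.continuousOn) (hcont_time hK.continuousOn_time) fun t _ k hk =>
        ((hK.hasDerivAt_time _ z (u k) (hVA z hzV k hk)).comp_sub_const t k).const_mul (ψ k))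
    (contDiffAt_zero.2 ⟨univ, univ_mem,
      continuousOn_intervalIntegral_param hA (hcont_time hK.continuousOn_time)⟩)
    (eventually_of_mem (hV.mem_nhds hzV) fun w hw => hasDerivAt_intervalIntegral_param hA hV hw
      (hcont_space hK.continuousOn) (hcont_space hK.continuousOn_space) fun w hw k hk =>
        (hK.hasDerivAt_space _ w (u k) (hVA w hw k hk)).const_mul (ψ k))
    (eventually_of_mem (hV.mem_nhds hzV) fun w hw => hasDerivAt_intervalIntegral_param hA hV hw
      (hcont_space hK.continuousOn_space) (hcont_space hK.continuousOn_space_space)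
        fun w hw k hk => (hK.hasDerivAt_space_space _ w (u k) (hVA w hw k hk)).const_mul (ψ k))
    (contDiffAt_zero.2 ⟨V, hV.mem_nhds hzV,
      continuousOn_intervalIntegral_param hA (hcont_space hK.continuousOn_space_space)⟩)
    (hK.integral_time_eq hA hψ hu (hVA z hzV))

/-- Causality lets the integral run up to a horizon `A > τ` that does not depend on the time, so
that no boundary term appears on differentiating under the integral sign. -/
theorem solvesBesselPDEAt_layerPotential (hK : IsCausalBesselKernel b U K Ks Kz Kzz) {T : ℝ}
    (hU : IsOpen U) (hψ : ContinuousOn ψ (Icc 0 T)) (hu : ContinuousOn u (Icc 0 T))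
    (hτ : τ ∈ Ioo 0 T) (hz : ∀ k ∈ Icc 0 τ, (z, u k) ∈ U) :
    SolvesBesselPDEAt b (layerPotential K ψ u) τ z := by
  obtain ⟨A, ⟨hτA, hAT⟩, V, hV, hzV, hVA⟩ := exists_horizon_and_nhds hU hu hτ hz
  have hsub : Icc 0 A ⊆ Icc 0 T := Icc_subset_Icc_right hAT.le
  refine (hK.solvesBesselPDEAt_integral_horizon (hτ.1.trans hτA).le (hψ.mono hsub) (hu.mono hsub)
    hV hzV hVA).congr ?_
  filter_upwards [continuousAt_fst.eventually_mem (Icc_mem_nhds hτ.1 hτA)] with p hp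
  exact layerPotential_eq_integral_horizon hK.eq_zero_of_nonpos hp p.2

end IsCausalBesselKernel

end LayerPotential

section DoubleLayer

lemma continuousOn_doubleLayerKernel (b : ℝ) :
    ContinuousOn (fun p : ℝ × ℝ × ℝ => doubleLayerKernel b p.1 p.2.1 p.2.2)
      (univ ×ˢ offDiagonal) :=
  continuousOn_layerCombo b (by fun_prop) (fun _ hp => hp.2.2.1.ne') continuousOn_heatBlock

theorem isCausalBesselKernel_doubleLayerKernel (b : ℝ) :
    IsCausalBesselKernel b offDiagonal (doubleLayerKernel b)
      (fun s z ζ => layerCombo b ζ (heatBlockTimeDeriv s z ζ))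
      (fun s z ζ => z * layerCombo b ζ (radialDeriv ζ (heatBlock s z ζ)))
      (fun s z ζ => layerCombo b ζ (radialDeriv ζ (heatBlock s z ζ))
        + z ^ 2 * layerCombo b ζ (radialDeriv ζ (radialDeriv ζ (heatBlock s z ζ)))) := by
  let S : Set (ℝ × ℝ × ℝ) := univ ×ˢ offDiagonal
  have hz : ContinuousOn (fun p : ℝ × ℝ × ℝ => p.2.1) S := by fun_prop
  have hζ : ContinuousOn (fun p : ℝ × ℝ × ℝ => p.2.2) S := by fun_prop
  have hζ_ne : ∀ p ∈ S, p.2.2 ≠ 0 := fun p hp => hp.2.2.1.ne'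
  have hcont_radial := continuousOn_radialDeriv hζ continuousOn_heatBlock
  have hcont_first := continuousOn_layerCombo b hζ hζ_ne hcont_radial
  have hcont_second := continuousOn_layerCombo b hζ hζ_ne
    (continuousOn_radialDeriv hζ hcont_radial)
  refine
    { eq_zero_of_nonpos := fun s hs z ζ => doubleLayerKernel_of_nonpos hs b z ζ
      continuousOn := continuousOn_doubleLayerKernel b
      continuousOn_time := continuousOn_layerCombo b hζ hζ_ne continuousOn_heatBlockTimeDeriv
      continuousOn_space := hz.mul hcont_first
      continuousOn_space_space := hcont_first.add ((hz.pow 2).mul hcont_second)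
      hasDerivAt_time := fun s z ζ hp =>
        hasDerivAt_layerCombo b (hasDerivAt_heatBlock_time hp s)
      hasDerivAt_space := fun s z ζ _ => ?_
      hasDerivAt_space_space := fun s z ζ _ => ?_
      pde := fun s z ζ hp => ?_ }
  · simpa only [layerCombo_const_mul, doubleLayerKernel] using
      hasDerivAt_layerCombo b (hasDerivAt_heatBlock_left s z ζ)
  · have hradial := hasDerivAt_layerCombo (ζ := ζ) b
      (hasDerivAt_mul_radialDeriv (ζ := ζ) (hasDerivAt_heatBlock_left s z ζ))
    rw [layerCombo_const_mul] at hradial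
    convert! (hasDerivAt_id z).mul hradial using 1
    simp only [id_eq]
    ring
  · have hz_ne : z ≠ 0 := hp.1.ne'
    simp only [layerCombo_heatBlockTimeDeriv]
    field_simp

variable {t z : ℝ} {ψ u : ℝ → ℝ} (b : ℝ)

lemma mul_deriv_besselKernel_eqOn (hz : ∀ k ∈ Icc 0 t, (z, u k) ∈ offDiagonal) :
    EqOn (fun k => ψ k * deriv (fun ζ => besselKernel b (t - k) z ζ) (u k))
      (fun k => ψ k * doubleLayerKernel b (t - k) z (u k)) (Icc 0 t) := fun k hk => by
  obtain ⟨hz_pos, hu_pos, -⟩ := hz k hk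
  exact congrArg (ψ k * ·) (hasDerivAt_besselKernel b (sub_nonneg.2 hk.2) hz_pos hu_pos).deriv

lemma continuousOn_mul_deriv_besselKernel (hψ : ContinuousOn ψ (Icc 0 t))
    (hu : ContinuousOn u (Icc 0 t)) (hz : ∀ k ∈ Icc 0 t, (z, u k) ∈ offDiagonal) :
    ContinuousOn (fun k => ψ k * deriv (fun ζ => besselKernel b (t - k) z ζ) (u k)) (Icc 0 t) :=
  (continuousOn_layerIntegrand (continuousOn_doubleLayerKernel b) hψ hu continuousOn_const
    continuousOn_const continuousOn_id (mapsTo_id _) hz).congr (mul_deriv_besselKernel_eqOn b hz)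

lemma tendsto_mul_deriv_besselKernel_zero (ht : 0 < t) (hψ : ContinuousOn ψ (Icc 0 t))
    (hu : ContinuousOn u (Icc 0 t)) (hz : ∀ k ∈ Icc 0 t, (z, u k) ∈ offDiagonal) :
    Tendsto (fun k => ψ k * deriv (fun ζ => besselKernel b (t - k) z ζ) (u k))
      (𝓝[<] t) (𝓝 0) := by
  have hmem : t ∈ Icc 0 t := right_mem_Icc.2 ht.le
  have hzero : ψ t * deriv (fun ζ => besselKernel b (t - t) z ζ) (u t) = 0 :=
    (mul_deriv_besselKernel_eqOn b hz hmem).trans <| by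
      simp only [sub_self, doubleLayerKernel_of_nonpos le_rfl, mul_zero]
  have hlim := continuousOn_mul_deriv_besselKernel b hψ hu hz t hmem
  rw [ContinuousWithinAt, hzero] at hlim
  exact hlim.mono_left (nhdsWithin_le_of_mem (Icc_mem_nhdsLT ht))

lemma layerPotential_doubleLayerKernel_eq (ht : 0 ≤ t)
    (hz : ∀ k ∈ Icc 0 t, (z, u k) ∈ offDiagonal) :
    layerPotential (doubleLayerKernel b) ψ u t z
      = ∫ k in (0 : ℝ)..t, ψ k * deriv (fun ζ => besselKernel b (t - k) z ζ) (u k) :=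
  (intervalIntegral.integral_congr <| uIcc_of_le ht ▸ mul_deriv_besselKernel_eqOn b hz).symm

theorem solvesBesselPDEAt_double_layer {T τ : ℝ} {Ψ Φ y h : ℝ → ℝ} {q : ℝ → ℝ → ℝ}
    (hy : ContinuousOn y (Icc 0 T)) (hh : ContinuousOn h (Icc 0 T))
    (hΨ : ContinuousOn Ψ (Icc 0 T)) (hΦ : ContinuousOn Φ (Icc 0 T))
    (hq : ∀ τ z, q τ z = ∫ k in (0 : ℝ)..τ,
      (Ψ k * deriv (fun ζ => besselKernel b (τ - k) z ζ) (y k)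
        + Φ k * deriv (fun ζ => besselKernel b (τ - k) z ζ) (h k)))
    (hτ : τ ∈ Ioo 0 T) (hzy : ∀ k ∈ Icc 0 τ, (z, y k) ∈ offDiagonal)
    (hzh : ∀ k ∈ Icc 0 τ, (z, h k) ∈ offDiagonal) : SolvesBesselPDEAt b q τ z := by
  have hK := isCausalBesselKernel_doubleLayerKernel b
  refine ((hK.solvesBesselPDEAt_layerPotential isOpen_offDiagonal hΨ hy hτ hzy).add
    (hK.solvesBesselPDEAt_layerPotential isOpen_offDiagonal hΦ hh hτ hzh)).congr ?_
  filter_upwards [eventually_forall_Icc_mem isOpen_offDiagonal hy hτ hzy,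
    eventually_forall_Icc_mem isOpen_offDiagonal hh hτ hzh] with ⟨t, w⟩ ⟨ht, hwy⟩ ⟨_, hwh⟩
  have hint {ψ u : ℝ → ℝ} (hψ : ContinuousOn ψ (Icc 0 T)) (hu : ContinuousOn u (Icc 0 T))
      (hw : ∀ k ∈ Icc 0 t, (w, u k) ∈ offDiagonal) : IntervalIntegrable
        (fun k => ψ k * deriv (fun ζ => besselKernel b (t - k) w ζ) (u k)) volume 0 t :=
    have hsub : Icc 0 t ⊆ Icc 0 T := Icc_subset_Icc_right ht.2
    (continuousOn_mul_deriv_besselKernel b (hψ.mono hsub) (hu.mono hsub)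
      hw).intervalIntegrable_of_Icc ht.1
  rw [hq, intervalIntegral.integral_add (hint hΨ hy hwy) (hint hΦ hh hwh),
    layerPotential_doubleLayerKernel_eq b ht.1 hwy, layerPotential_doubleLayerKernel_eq b ht.1 hwh]

end DoubleLayer

lemma pos_and_ne_of_between {T t z : ℝ} {y h : ℝ → ℝ} (ht : t ∈ Icc 0 T)
    (hypos : ∀ k ∈ Icc (0 : ℝ) T, 0 < y k) (hz : ∀ k ∈ Icc (0 : ℝ) t, y k < z ∧ z < h k) :
    0 < z ∧ ∀ k ∈ Icc (0 : ℝ) t, z ≠ y k ∧ z ≠ h k :=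
  ⟨(hypos 0 ⟨le_rfl, ht.1.trans ht.2⟩).trans (hz 0 ⟨le_rfl, ht.1⟩).1,
    fun k hk => ⟨(hz k hk).1.ne', (hz k hk).2.ne⟩⟩

theorem double_bessel_potential_solves_pde_general
    (b T' : ℝ) (y h Ψ Φ : ℝ → ℝ)
    (hy : ContinuousOn y (Icc 0 T')) (hh : ContinuousOn h (Icc 0 T'))
    (hypos : ∀ k ∈ Icc (0 : ℝ) T', 0 < y k) (hhpos : ∀ k ∈ Icc (0 : ℝ) T', 0 < h k)
    (hΨ : ContinuousOn Ψ (Icc 0 T')) (hΦ : ContinuousOn Φ (Icc 0 T'))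
    (q : ℝ → ℝ → ℝ)
    (hq : ∀ τ z, q τ z = ∫ k in (0 : ℝ)..τ,
      (Ψ k * deriv (fun ζ => besselKernel b (τ - k) z ζ) (y k)
        + Φ k * deriv (fun ζ => besselKernel b (τ - k) z ζ) (h k)))
    (τ z : ℝ) (hτ : τ ∈ Ioc 0 T') (hzpos : 0 < z)
    (hz : ∀ k ∈ Icc (0 : ℝ) τ, z ≠ y k ∧ z ≠ h k) :
    IntervalIntegrable
      (fun k => Ψ k * deriv (fun ζ => besselKernel b (τ - k) z ζ) (y k)
        + Φ k * deriv (fun ζ => besselKernel b (τ - k) z ζ) (h k)) volume 0 τ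
    ∧ Tendsto (fun k => Ψ k * deriv (fun ζ => besselKernel b (τ - k) z ζ) (y k)) (𝓝[<] τ) (𝓝 0)
    ∧ Tendsto (fun k => Φ k * deriv (fun ζ => besselKernel b (τ - k) z ζ) (h k)) (𝓝[<] τ) (𝓝 0)
    ∧ ∀ τ' z' : ℝ, τ' ∈ Ioo 0 T' → 0 < z' → (∀ k ∈ Icc (0 : ℝ) τ', z' ≠ y k ∧ z' ≠ h k) →
        ContDiffAt ℝ 1 (fun t => q t z') τ' ∧
        ContDiffAt ℝ 2 (fun w => q τ' w) z' ∧
        deriv (fun t => q t z') τ'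
          = 1 / 2 * deriv (fun w => deriv (fun w' => q τ' w') w) z'
            + b / z' * deriv (fun w => q τ' w) z' := by
  have hoff {t w : ℝ} (ht : t ≤ T') (hw : 0 < w) (hne : ∀ k ∈ Icc 0 t, w ≠ y k ∧ w ≠ h k) :
      (∀ k ∈ Icc 0 t, (w, y k) ∈ offDiagonal) ∧ ∀ k ∈ Icc 0 t, (w, h k) ∈ offDiagonal :=
    ⟨fun k hk => ⟨hw, hypos k (Icc_subset_Icc_right ht hk), (hne k hk).1⟩,
      fun k hk => ⟨hw, hhpos k (Icc_subset_Icc_right ht hk), (hne k hk).2⟩⟩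
  obtain ⟨hzy, hzh⟩ := hoff hτ.2 hzpos hz
  have hsub : Icc 0 τ ⊆ Icc 0 T' := Icc_subset_Icc_right hτ.2
  have hcont := (continuousOn_mul_deriv_besselKernel b (hΨ.mono hsub) (hy.mono hsub) hzy).add
    (continuousOn_mul_deriv_besselKernel b (hΦ.mono hsub) (hh.mono hsub) hzh)
  refine ⟨hcont.intervalIntegrable_of_Icc hτ.1.le,
    tendsto_mul_deriv_besselKernel_zero b hτ.1 (hΨ.mono hsub) (hy.mono hsub) hzy,
    tendsto_mul_deriv_besselKernel_zero b hτ.1 (hΦ.mono hsub) (hh.mono hsub) hzh,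
    fun τ' z' hτ' hzpos' hz' => ?_⟩
  obtain ⟨hzy', hzh'⟩ := hoff hτ'.2.le hzpos' hz'
  exact solvesBesselPDEAt_double_layer b hy hh hΨ hΦ hq hτ' hzy' hzh'

/-- the double-layer Bessel potential attached to the two moving
boundaries `y < h` is well defined (both integrands extend continuously by 0 at
`k = τ`) and solves the Bessel PDE strictly between the boundaries. -/
theorem double_bessel_potential_solves_pde
    (b T' : ℝ) (hb : 1 / 2 ≤ b) (hT' : 0 < T')
    (y h Ψ Φ : ℝ → ℝ)
    (hy : ContinuousOn y (Set.Icc 0 T')) (hh : ContinuousOn h (Set.Icc 0 T'))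
    (hypos : ∀ k ∈ Set.Icc (0 : ℝ) T', 0 < y k)
    (hyh : ∀ k ∈ Set.Icc (0 : ℝ) T', y k < h k)
    (hΨ : ContinuousOn Ψ (Set.Icc 0 T')) (hΦ : ContinuousOn Φ (Set.Icc 0 T'))
    (q : ℝ → ℝ → ℝ)
    (hq : ∀ τ z, q τ z =
      ∫ k in (0 : ℝ)..τ,
        (Ψ k * deriv (fun ζ => besselKernel b (τ - k) z ζ) (y k)
          + Φ k * deriv (fun ζ => besselKernel b (τ - k) z ζ) (h k)))
    (τ z : ℝ) (hτ : τ ∈ Set.Ioc 0 T')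
    (hz : ∀ k ∈ Set.Icc (0 : ℝ) τ, y k < z ∧ z < h k) :
    IntervalIntegrable
      (fun k => Ψ k * deriv (fun ζ => besselKernel b (τ - k) z ζ) (y k)
        + Φ k * deriv (fun ζ => besselKernel b (τ - k) z ζ) (h k))
      MeasureTheory.volume 0 τ
    ∧ Filter.Tendsto
        (fun k => Ψ k * deriv (fun ζ => besselKernel b (τ - k) z ζ) (y k))
        (nhdsWithin τ (Set.Iio τ)) (nhds 0)
    ∧ Filter.Tendsto
        (fun k => Φ k * deriv (fun ζ => besselKernel b (τ - k) z ζ) (h k))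
        (nhdsWithin τ (Set.Iio τ)) (nhds 0)
    ∧ ∀ τ' z' : ℝ, τ' ∈ Set.Ioo 0 T' →
        (∀ k ∈ Set.Icc (0 : ℝ) τ', y k < z' ∧ z' < h k) →
        ContDiffAt ℝ 1 (fun t => q t z') τ' ∧
        ContDiffAt ℝ 2 (fun w => q τ' w) z' ∧
        deriv (fun t => q t z') τ'
          = 1 / 2 * deriv (fun w => deriv (fun w' => q τ' w') w) z'
            + b / z' * deriv (fun w => q τ' w) z' := by
  obtain ⟨hzpos, hne⟩ := pos_and_ne_of_between (Ioc_subset_Icc_self hτ) hypos hz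
  obtain ⟨hint, hlim_y, hlim_h, hsolves⟩ := double_bessel_potential_solves_pde_general b T' y h Ψ Φ
    hy hh hypos (fun k hk => (hypos k hk).trans (hyh k hk)) hΨ hΦ q hq τ z hτ hzpos hne
  refine ⟨hint, hlim_y, hlim_h, fun τ' z' hτ' hz' => ?_⟩
  exact (pos_and_ne_of_between (Ioo_subset_Icc_self hτ') hypos hz').elim (hsolves τ' z' hτ')
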